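/- Interior Hölder estimate for the fractional Laplacian (Hölder range): let β satisfy 0 < β < 2s and β ≤ 1. There exists a constant C, depending only on n, s and β, with the following property: if w : ℝⁿ → ℝ is infinitely differentiable, ∫_{ℝⁿ} (1 + |x|)^{−n−2s} |w(x)| dx < ∞, h : ℝⁿ → ℝ is bounded on the ball B₂ = B(0,2), and for every x ∈ B₂ the value (−Δ)^s w(x) exists and equals h(x), then for all x, y in the ball B_{1/2} = B(0, 1/2): |w(x) − w(y)| ≤ C (∫_{ℝⁿ} (1 + |z|)^{−n−2s} |w(z)| dz + sup_{B₂} |w| + sup_{B₂} |h|) |x − y|^β, and also sup_{B_{1/2}} |w| ≤ C (∫_{ℝⁿ} (1 + |z|)^{−n−2s} |w(z)| dz + sup_{B₂} |w| + sup_{B₂} |h|). -/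

import Mathlib

open MeasureTheory Metric Set Filter

/-- `fracLapEq n s u x g` : the integral fractional Laplacian `(−Δ)^s u(x)` exists
(as a principal value) and equals `g`. -/
def fracLapEq (n : ℕ) (s : ℝ) (u : EuclideanSpace ℝ (Fin n) → ℝ)
    (x : EuclideanSpace ℝ (Fin n)) (g : ℝ) : Prop :=
  Tendsto (fun ε : ℝ =>
      (2 ^ (2 * s) * s * Real.Gamma (s + n / 2) /
          (Real.pi ^ ((n : ℝ) / 2) * Real.Gamma (1 - s))) *
        ∫ y in {y : EuclideanSpace ℝ (Fin n) | ε < dist y x},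
          (u x - u y) / dist x y ^ ((n : ℝ) + 2 * s))
    (nhdsWithin 0 (Ioi 0)) (nhds g)

/-- the `L^∞(S)` norm, as `sSup {|f x| : x ∈ S}`. -/
noncomputable def supOn {α : Type*} (S : Set α) (f : α → ℝ) : ℝ :=
  sSup ((fun x => |f x|) '' S)

/-- Second difference estimate for powers. -/
lemma sd_pow (q : ℝ) (hq0 : 0 < q) (hq2 : q < 2) (v : ℝ) (hv : |v| ≤ 1/2) :
    (q * (1-q)) * ((1+v)^q + (1-v)^q - 2) ≤ - ((q*(1-q))^2 * (2/9) * v^2) := by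
  set a := q * (1-q) with ha
  have hconc : ConcaveOn ℝ (Icc (1/2:ℝ) (3/2)) (fun x => a * x^q + a^2/9 * x^2) := by
    refine concaveOn_of_hasDerivWithinAt2_nonpos (f' := fun x => a * (q * x^(q-1)) + a^2/9 * (2*x))
      (f'' := fun x => a * (q * ((q-1) * x^(q-1-1))) + a^2/9 * 2) (convex_Icc _ _) ?_ ?_ ?_ ?_
    · apply ContinuousOn.add
      · exact continuousOn_const.mul ((Real.continuous_rpow_const hq0.le).continuousOn)
      · fun_prop
    · intro x hx
      rw [interior_Icc] at hx
      have hx0 : x ≠ 0 := by have := hx.1; intro h; rw [h] at this; norm_num at this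
      apply HasDerivAt.hasDerivWithinAt
      have h1 := (Real.hasDerivAt_rpow_const (x := x) (p := q) (Or.inl hx0)).const_mul a
      have h2 := ((hasDerivAt_pow 2 x)).const_mul (a^2/9)
      refine (h1.add h2).congr_deriv ?_
      simp
    · intro x hx
      rw [interior_Icc] at hx
      have hx0 : x ≠ 0 := by have := hx.1; intro h; rw [h] at this; norm_num at this
      apply HasDerivAt.hasDerivWithinAt
      have h1 := (((Real.hasDerivAt_rpow_const (x := x) (p := q-1) (Or.inl hx0)).const_mul q)).const_mul a
      have h2 := (((hasDerivAt_id x)).const_mul 2).const_mul (a^2/9)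
      refine (h1.add h2).congr_deriv ?_
      simp
    · intro x hx
      rw [interior_Icc] at hx
      have hx0 : 0 < x := by linarith [hx.1]
      have e : q - 1 - 1 = q - 2 := by ring
      rw [e]
      have h1 : (4/9:ℝ) ≤ x^(q-2) := by
        have h2 : (3/2:ℝ)^(q-2) ≤ x^(q-2) :=
          Real.rpow_le_rpow_of_nonpos hx0 hx.2.le (by linarith)
        have h3 : (3/2:ℝ)^(-2:ℝ) ≤ (3/2:ℝ)^(q-2) :=
          Real.rpow_le_rpow_of_exponent_le (by norm_num) (by linarith)
        have h4 : (3/2:ℝ)^(-2:ℝ) = 4/9 := by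
          rw [Real.rpow_neg (by norm_num)]; norm_num
        linarith
      have : a * (q * ((q-1) * x^(q-2))) = - (a^2 * x^(q-2)) := by rw [ha]; ring
      rw [this]
      nlinarith [sq_nonneg a]
  obtain ⟨h1, h2⟩ := abs_le.1 hv
  have m1 : 1 + v ∈ Icc (1/2:ℝ) (3/2) := ⟨by linarith, by linarith⟩
  have m2 : 1 - v ∈ Icc (1/2:ℝ) (3/2) := ⟨by linarith, by linarith⟩
  have := hconc.2 m1 m2 (by norm_num : (0:ℝ) ≤ 1/2) (by norm_num : (0:ℝ) ≤ 1/2) (by norm_num)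
  simp only [smul_eq_mul] at this
  have e : 1/2*(1+v) + 1/2*(1-v) = 1 := by ring
  rw [e, Real.one_rpow] at this
  nlinarith [this]

lemma sd_pow' (q : ℝ) (hq0 : 0 < q) (hq2 : q < 2) (r : ℝ) (hr : 0 < r) (u : ℝ) (hu : |u| ≤ r/2) :
    (q * (1-q)) * ((r+u)^q + (r-u)^q - 2 * r^q) ≤ - ((q*(1-q))^2 * (2/9) * u^2 * r^(q-2)) := by
  have hv : |u/r| ≤ 1/2 := by
    rw [abs_div, abs_of_pos hr, div_le_iff₀ hr]; linarith
  have h := sd_pow q hq0 hq2 (u/r) hv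
  obtain ⟨h1, h2⟩ := abs_le.1 hv
  have e1 : (r+u)^q = r^q * (1+u/r)^q := by
    rw [← Real.mul_rpow hr.le (by linarith)]; congr 1; field_simp
  have e2 : (r-u)^q = r^q * (1-u/r)^q := by
    rw [← Real.mul_rpow hr.le (by linarith)]; congr 1; field_simp
  have e3 : r^q = r^(q-2) * r^2 := by
    rw [← Real.rpow_natCast r 2, ← Real.rpow_add hr]; congr 1; push_cast; ring
  have := mul_le_mul_of_nonneg_left h (Real.rpow_nonneg hr.le q)
  rw [e1, e2]
  calc _ = r^q * (q * (1 - q) * ((1 + u / r) ^ q + (1 - u / r) ^ q - 2)) := by ring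
    _ ≤ _ := this
    _ = _ := by rw [e3]; field_simp

lemma exists_phi (s β : ℝ) (hβ : 0 < β) (hs : s < 1) (hβ2s : β < 2 * s) (hβ1 : β ≤ 1) :
    ∃ (φ : ℝ → ℝ) (γ m : ℝ), γ < 2 * s ∧ 0 < m ∧ Continuous φ ∧
      (∀ r, 0 ≤ r → r ≤ 4 → r^β/2 ≤ φ r ∧ φ r ≤ r^β) ∧
      (∀ r u, 0 < r → |u| ≤ r/2 → φ (r+u) + φ (r-u) - 2 * φ r ≤ - (m * u^2 * r^(γ-2))) := by
  rcases hβ1.lt_or_eq with hlt | heq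
  · have hb : 0 < 1 - β := by linarith
    refine ⟨fun r => r^β, β, β*(1-β)*(2/9), hβ2s, by positivity,
      Real.continuous_rpow_const hβ.le, ?_, ?_⟩
    · intro r hr _
      have := Real.rpow_nonneg hr β
      exact ⟨by linarith, le_rfl⟩
    · intro r u hr hu
      have h := sd_pow' β hβ (by linarith) r hr u hu
      have ha : 0 < β * (1-β) := by positivity
      refine le_of_mul_le_mul_left (h.trans (le_of_eq ?_)) ha
      ring
  · subst heq
    set γ := (1 + 2*s)/2 with hγ
    have hγ1 : 1 < γ := by linarith
    have hγ2 : γ < 2 := by linarith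
    have ha : 0 < γ * (γ-1) := mul_pos (by linarith) (by linarith)
    refine ⟨fun r => r - r^γ/16, γ, γ*(γ-1)*(2/9)/16, by linarith, by positivity,
      by have := Real.continuous_rpow_const (q := γ) (by linarith); fun_prop, ?_, ?_⟩
    · intro r hr hr4
      have h0 := Real.rpow_nonneg hr γ
      have h1 : r^γ ≤ 4 * r := by
        rcases hr.eq_or_lt with h | h
        · rw [← h, Real.zero_rpow (by linarith)]; simp
        · have : r^γ = r^(γ-1) * r := by
            rw [← Real.rpow_add_one h.ne']; congr 1; ring
          rw [this]
          have h2 : r^(γ-1) ≤ 4^(γ-1) := Real.rpow_le_rpow hr hr4 (by linarith)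
          have h3 : (4:ℝ)^(γ-1) ≤ 4^(1:ℝ) :=
            Real.rpow_le_rpow_of_exponent_le (by norm_num) (by linarith)
          rw [Real.rpow_one] at h3
          exact mul_le_mul_of_nonneg_right (h2.trans h3) hr
      rw [Real.rpow_one]
      constructor <;> linarith
    · intro r u hr hu
      have h := sd_pow' γ (by linarith) hγ2 r hr u hu
      refine le_of_mul_le_mul_left ?_ ha
      nlinarith [h]

lemma weight_bound {n : ℕ} {p : ℝ} (hp : 0 < p) {R δ : ℝ} (hδ : 0 < δ) (hR : 0 ≤ R)
    {x z : EuclideanSpace ℝ (Fin n)} (hx : ‖x‖ ≤ R) (hz : δ ≤ ‖z‖) :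
    1 / ‖z‖ ^ p ≤ ((1+R)/δ + 1)^p * (1 + ‖x+z‖)^(-p) := by
  have hz0 : 0 < ‖z‖ := hδ.trans_le hz
  have h1 : 1 + ‖x+z‖ ≤ ((1+R)/δ+1) * ‖z‖ := by
    have := norm_add_le x z
    have h2 : (1+R) ≤ (1+R)/δ * ‖z‖ := by
      rw [div_mul_eq_mul_div, le_div_iff₀ hδ]
      exact mul_le_mul_of_nonneg_left hz (by linarith)
    linarith
  have hpos : 0 < 1 + ‖x+z‖ := by positivity
  have h3 := Real.rpow_le_rpow hpos.le h1 hp.le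
  rw [Real.mul_rpow (by positivity) hz0.le] at h3
  rw [Real.rpow_neg hpos.le, ← div_eq_mul_inv, div_le_div_iff₀ (by positivity) (by positivity)]
  linarith

lemma tail_integrable {n : ℕ} {p : ℝ} (hp : 0 < p) {w : EuclideanSpace ℝ (Fin n) → ℝ}
    (hw : Continuous w)
    (hI : Integrable (fun x : EuclideanSpace ℝ (Fin n) => (1 + ‖x‖) ^ (-p) * |w x|))
    {R δ : ℝ} (hδ : 0 < δ) (hR : 0 ≤ R) {x : EuclideanSpace ℝ (Fin n)} (hx : ‖x‖ ≤ R) :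
    IntegrableOn (fun z => |w (x+z)| / ‖z‖^p) {z | δ ≤ ‖z‖} ∧
    ∫ z in {z | δ ≤ ‖z‖}, |w (x+z)| / ‖z‖^p ≤
      ((1+R)/δ + 1)^p * ∫ z, (1 + ‖z‖) ^ (-p) * |w z| := by
  have hI' : Integrable (fun z => ((1+R)/δ + 1)^p * ((1 + ‖x+z‖) ^ (-p) * |w (x+z)|)) :=
    (hI.comp_add_left x).const_mul _
  have hms : MeasurableSet {z : EuclideanSpace ℝ (Fin n) | δ ≤ ‖z‖} :=
    measurableSet_le measurable_const measurable_norm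
  have hb : ∀ z ∈ {z : EuclideanSpace ℝ (Fin n) | δ ≤ ‖z‖}, |w (x+z)| / ‖z‖^p ≤
      ((1+R)/δ + 1)^p * ((1 + ‖x+z‖) ^ (-p) * |w (x+z)|) := by
    intro z hz
    have := mul_le_mul_of_nonneg_right (weight_bound hp hδ hR hx hz) (abs_nonneg (w (x+z)))
    calc _ = 1 / ‖z‖^p * |w (x+z)| := by ring
      _ ≤ _ := this
      _ = _ := by ring
  have hint : IntegrableOn (fun z => |w (x+z)| / ‖z‖^p) {z | δ ≤ ‖z‖} := by
    refine Integrable.mono' hI'.integrableOn ?_ ?_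
    · apply Measurable.aestronglyMeasurable
      have : Measurable (fun z => w (x+z)) := (hw.comp (continuous_const.add continuous_id)).measurable
      have h2 : Measurable fun z : EuclideanSpace ℝ (Fin n) => ‖z‖^p := measurable_norm.pow_const p
      exact (measurable_norm.comp this).div h2
    · refine (ae_restrict_iff' hms).2 (Eventually.of_forall fun z hz => ?_)
      rw [Real.norm_of_nonneg (by positivity)]
      exact hb z hz
  refine ⟨hint, ?_⟩
  calc _ ≤ ∫ z in {z | δ ≤ ‖z‖}, ((1+R)/δ + 1)^p * ((1 + ‖x+z‖) ^ (-p) * |w (x+z)|) :=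
        setIntegral_mono_on hint hI'.integrableOn hms hb
    _ ≤ ∫ z, ((1+R)/δ + 1)^p * ((1 + ‖x+z‖) ^ (-p) * |w (x+z)|) :=
        setIntegral_le_integral hI' (Eventually.of_forall fun z => by positivity)
    _ = _ := by
        rw [integral_const_mul, integral_add_left_eq_self (fun z => (1 + ‖z‖) ^ (-p) * |w z|) x]

lemma const_tail_integrable {n : ℕ} {p : ℝ} (hp : (n:ℝ) < p) {δ : ℝ} (hδ : 0 < δ) :
    IntegrableOn (fun z : EuclideanSpace ℝ (Fin n) => 1 / ‖z‖^p) {z | δ ≤ ‖z‖} := by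
  have h := (tail_integrable (n := n) (p := p) (by have := n.cast_nonneg (α := ℝ); linarith)
    (w := fun _ => 1) continuous_const ?_ hδ le_rfl (x := 0) (by simp)).1
  · simpa using h
  · simpa using integrable_one_add_norm (E := EuclideanSpace ℝ (Fin n)) (μ := volume) (r := p) (by simpa using hp)

lemma diff_integrable {n : ℕ} {p : ℝ} (hp : (n:ℝ) < p) {w : EuclideanSpace ℝ (Fin n) → ℝ}
    (hw : Continuous w)
    (hI : Integrable (fun x : EuclideanSpace ℝ (Fin n) => (1 + ‖x‖) ^ (-p) * |w x|))
    {ε : ℝ} (hε : 0 < ε) (x : EuclideanSpace ℝ (Fin n)) :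
    IntegrableOn (fun z => (w x - w (x+z)) / ‖z‖^p) {z | ε < ‖z‖} := by
  have hp0 : 0 < p := by have := n.cast_nonneg (α := ℝ); linarith
  have h1 := (tail_integrable hp0 hw hI hε (norm_nonneg x) le_rfl).1
  have h2 := (const_tail_integrable hp hε).const_mul |w x|
  have hsub : {z : EuclideanSpace ℝ (Fin n) | ε < ‖z‖} ⊆ {z | ε ≤ ‖z‖} := fun z hz => (show ε < ‖z‖ from hz).le
  refine Integrable.mono' (IntegrableOn.mono_set (h2.add h1) hsub) ?_ ?_
  · apply Measurable.aestronglyMeasurable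
    have : Measurable (fun z => w (x+z)) := (hw.comp (continuous_const.add continuous_id)).measurable
    have h2 : Measurable fun z : EuclideanSpace ℝ (Fin n) => ‖z‖^p := measurable_norm.pow_const p
    exact (measurable_const.sub this).div h2
  · refine Eventually.of_forall fun z => ?_
    have : 0 ≤ ‖z‖^p := by positivity
    rw [norm_div, Real.norm_of_nonneg this]
    simp only [Pi.add_apply]
    rw [mul_one_div, ← add_div]
    exact div_le_div_of_nonneg_right (abs_sub _ _) this

lemma local_integrable {n : ℕ} (hn : 0 < n) {s : ℝ} (hs : s < 1) :
    IntegrableOn (fun z : EuclideanSpace ℝ (Fin n) => ‖z‖^2 / ‖z‖^((n:ℝ) + 2*s)) (ball 0 (1/4)) := by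
  have : Nonempty (Fin n) := ⟨⟨0, hn⟩⟩
  have : Nontrivial (EuclideanSpace ℝ (Fin n)) := by infer_instance
  rw [integrableOn_fun_norm_addHaar volume (f := fun y => y^2 / y^((n:ℝ) + 2*s))]
  have h := (intervalIntegral.integrableOn_Ioo_rpow_iff (s := 1 - 2*s) (t := 1/4) (by norm_num)).2 (by linarith)
  refine (integrableOn_congr_fun ?_ measurableSet_Ioo).1 h
  intro y hy
  have hy0 : 0 < y := hy.1
  simp only [smul_eq_mul, finrank_euclideanSpace, Fintype.card_fin]
  rw [← mul_div_assoc, ← pow_add, ← Real.rpow_natCast, ← Real.rpow_sub hy0]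
  congr 1
  have : ((n - 1 + 2 : ℕ) : ℝ) = n + 1 := by
    have : n - 1 + 2 = n + 1 := by omega
    rw [this]; push_cast; ring
  rw [this]; ring

lemma translate_int {n : ℕ} {p : ℝ} (u : EuclideanSpace ℝ (Fin n) → ℝ) (x : EuclideanSpace ℝ (Fin n))
    (ε : ℝ) :
    ∫ y in {y : EuclideanSpace ℝ (Fin n) | ε < dist y x}, (u x - u y) / dist x y ^ p =
    ∫ z in {z : EuclideanSpace ℝ (Fin n) | ε < ‖z‖}, (u x - u (x+z)) / ‖z‖ ^ p := by
  have m1 : MeasurableSet {y : EuclideanSpace ℝ (Fin n) | ε < dist y x} :=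
    measurableSet_lt measurable_const (measurable_id.dist measurable_const)
  have m2 : MeasurableSet {z : EuclideanSpace ℝ (Fin n) | ε < ‖z‖} :=
    measurableSet_lt measurable_const measurable_norm
  rw [← integral_indicator m1, ← integral_indicator m2, ← integral_add_left_eq_self _ x]
  congr 1
  ext z
  simp [indicator, dist_eq_norm]

lemma comp_Q {n : ℕ} (G : EuclideanSpace ℝ (Fin n) → ℝ) (hG : Integrable G)
    (T : EuclideanSpace ℝ (Fin n) ≃ₗᵢ[ℝ] EuclideanSpace ℝ (Fin n)) (ρ : ℝ) :
    Integrable (fun z => G (if ‖z‖ < ρ then T z else z)) ∧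
    ∫ z, G (if ‖z‖ < ρ then T z else z) = ∫ z, G z := by
  have mB : MeasurableSet {z : EuclideanSpace ℝ (Fin n) | ‖z‖ < ρ} :=
    measurableSet_lt measurable_norm measurable_const
  set B := {z : EuclideanSpace ℝ (Fin n) | ‖z‖ < ρ}
  have hk : Integrable (B.indicator G) := hG.indicator mB
  have hkT : Integrable (fun z => B.indicator G (T z)) :=
    T.measurePreserving.integrable_comp_of_integrable hk
  have e : (fun z => G (if ‖z‖ < ρ then T z else z)) =
      fun z => G z + (B.indicator G (T z) - B.indicator G z) := by
    ext z
    by_cases h : ‖z‖ < ρ <;> simp [B, indicator, h]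
  rw [e]
  have hd : Integrable (fun z => B.indicator G (T z) - B.indicator G z) := hkT.sub hk
  refine ⟨hG.add hd, ?_⟩
  rw [integral_add hG hd, integral_sub hkT hk]
  have : ∫ z, B.indicator G (T z) = ∫ z, B.indicator G z :=
    T.measurePreserving.integral_comp T.toMeasurableEquiv.measurableEmbedding _
  rw [this]; ring

lemma coupling {n : ℕ} (f g : EuclideanSpace ℝ (Fin n) → ℝ) (ε : ℝ)
    (hf : IntegrableOn f {z | ε < ‖z‖}) (hg : IntegrableOn g {z | ε < ‖z‖})
    (T : EuclideanSpace ℝ (Fin n) ≃ₗᵢ[ℝ] EuclideanSpace ℝ (Fin n)) (ρ : ℝ) :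
    IntegrableOn (fun z => f z + f (-z) - (g (if ‖z‖ < ρ then T z else z) +
      g (-(if ‖z‖ < ρ then T z else z)))) {z | ε < ‖z‖} ∧
    ∫ z in {z | ε < ‖z‖}, (f z + f (-z) - (g (if ‖z‖ < ρ then T z else z) +
      g (-(if ‖z‖ < ρ then T z else z)))) =
    2 * ((∫ z in {z | ε < ‖z‖}, f z) - ∫ z in {z | ε < ‖z‖}, g z) := by
  have m : MeasurableSet {z : EuclideanSpace ℝ (Fin n) | ε < ‖z‖} :=
    measurableSet_lt measurable_const measurable_norm
  set S := {z : EuclideanSpace ℝ (Fin n) | ε < ‖z‖} with hS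
  rw [← integrable_indicator_iff m, ← integral_indicator m, ← integral_indicator m,
    ← integral_indicator m]
  have hF := hf.integrable_indicator m
  have hG := hg.integrable_indicator m
  have hFn : Integrable (fun z => S.indicator f (-z)) := hF.comp_neg
  have hGn : Integrable (fun z => S.indicator g (-z)) := hG.comp_neg
  obtain ⟨i1, e1⟩ := comp_Q _ hG T ρ
  obtain ⟨i2, e2⟩ := comp_Q _ hGn T ρ
  have e : S.indicator (fun z => f z + f (-z) - (g (if ‖z‖ < ρ then T z else z) +
      g (-(if ‖z‖ < ρ then T z else z)))) = fun z => S.indicator f z + S.indicator f (-z) -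
      (S.indicator g (if ‖z‖ < ρ then T z else z) + S.indicator g (-(if ‖z‖ < ρ then T z else z))) := by
    ext z
    have hq : ‖(if ‖z‖ < ρ then T z else z)‖ = ‖z‖ := by split_ifs <;> simp
    by_cases h : ε < ‖z‖
    · simp [indicator, S, h, hq]
    · simp [indicator, S, h, hq]
  rw [e]
  have a1 : Integrable (fun z => S.indicator f z + S.indicator f (-z)) := hF.add hFn
  have a2 : Integrable (fun z => S.indicator g (if ‖z‖ < ρ then T z else z) +
      S.indicator g (-(if ‖z‖ < ρ then T z else z))) := i1.add i2
  refine ⟨a1.sub a2, ?_⟩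
  rw [integral_sub a1 a2, integral_add hF hFn, integral_add i1 i2, e1, e2,
    integral_neg_eq_self (S.indicator f), integral_neg_eq_self (S.indicator g)]
  ring

lemma tail_neg {n : ℕ} {p : ℝ} (hp : 0 < p) {w : EuclideanSpace ℝ (Fin n) → ℝ}
    (hw : Continuous w)
    (hI : Integrable (fun x : EuclideanSpace ℝ (Fin n) => (1 + ‖x‖) ^ (-p) * |w x|))
    {R δ : ℝ} (hδ : 0 < δ) (hR : 0 ≤ R) {x : EuclideanSpace ℝ (Fin n)} (hx : ‖x‖ ≤ R) :
    IntegrableOn (fun z => |w (x+-z)| / ‖z‖^p) {z | δ ≤ ‖z‖} ∧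
    ∫ z in {z | δ ≤ ‖z‖}, |w (x+-z)| / ‖z‖^p ≤
      ((1+R)/δ + 1)^p * ∫ z, (1 + ‖z‖) ^ (-p) * |w z| := by
  have hI' : Integrable (fun x : EuclideanSpace ℝ (Fin n) => (1 + ‖x‖) ^ (-p) * |w (-x)|) := by
    simpa using hI.comp_neg
  have h := tail_integrable (w := fun z => w (-z)) hp (hw.comp continuous_neg) hI' hδ hR
    (x := -x) (by simpa using hx)
  have e := integral_neg_eq_self (fun x : EuclideanSpace ℝ (Fin n) => (1 + ‖x‖) ^ (-p) * |w x|) volume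
  simp only [norm_neg] at e
  rw [e] at h
  have e2 : ∀ z, -(-x+z) = x + -z := fun z => by abel
  simpa only [e2] using h

lemma near_bound {n : ℕ} {w : EuclideanSpace ℝ (Fin n) → ℝ} {φ : ℝ → ℝ} {L K m γ : ℝ}
    (hL : 0 ≤ L)
    (hφ : ∀ r u, 0 < r → |u| ≤ r/2 → φ (r+u) + φ (r-u) - 2 * φ r ≤ - (m * u^2 * r^(γ-2)))
    {x0 x y : EuclideanSpace ℝ (Fin n)} {r : ℝ} (hr : 0 < r) (hxy : ‖x - y‖ = r)
    (hx : ‖x‖ ≤ 1) (hy : ‖y‖ ≤ 5/4)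
    (hmax : ∀ x', ‖x'‖ ≤ 3/2 → ∀ y', ‖y'‖ ≤ 3/2 →
      w x' - w y' - L * φ ‖x'-y'‖ - K * ‖x'-x0‖^2 ≤ w x - w y - L * φ ‖x-y‖ - K * ‖x-x0‖^2)
    {z q : EuclideanSpace ℝ (Fin n)} (hz : ‖z‖ ≤ 1/4) (hq : ‖q‖ ≤ 1/4) {u : ℝ} (hu : |u| ≤ r/2)
    (h1 : ‖(x+z)-(y+q)‖ = r+u) (h2 : ‖(x+-z)-(y+-q)‖ = r-u) :
    L * (m * u^2 * r^(γ-2)) - 2*K*‖z‖^2 ≤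
      (w x - w (x+z)) + (w x - w (x+-z)) - ((w y - w (y+q)) + (w y - w (y+-q))) := by
  have a1 := hmax (x+z) ((norm_add_le _ _).trans (by linarith)) (y+q)
    ((norm_add_le _ _).trans (by linarith))
  have a2 := hmax (x+-z) ((norm_add_le _ _).trans (by rw [norm_neg]; linarith)) (y+-q)
    ((norm_add_le _ _).trans (by rw [norm_neg]; linarith))
  rw [h1, hxy] at a1
  rw [h2, hxy] at a2
  have a3 := mul_le_mul_of_nonneg_left (hφ r u hr hu) hL
  have pl := parallelogram_law_with_norm ℝ (x - x0) z
  have e1 : x + z - x0 = x - x0 + z := by abel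
  have e2 : x + -z - x0 = x - x0 - z := by abel
  rw [e1] at a1
  rw [e2] at a2
  have pl' : K * ‖x - x0 + z‖^2 + K * ‖x-x0-z‖^2 = 2*K*‖x-x0‖^2 + 2*K*‖z‖^2 := by
    linear_combination K * pl
  linarith

lemma core {n : ℕ} (hn : 0 < n) {s : ℝ} (hs0 : 0 < s) (hs : s < 1)
    {w : EuclideanSpace ℝ (Fin n) → ℝ} (hw : Continuous w)
    (hI : Integrable (fun x : EuclideanSpace ℝ (Fin n) => (1 + ‖x‖) ^ (-((n:ℝ) + 2*s)) * |w x|))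
    {M0 : ℝ} (hM0 : ∀ x, ‖x‖ < 2 → |w x| ≤ M0)
    {φ : ℝ → ℝ} {L K m γ : ℝ} (hL : 0 ≤ L) (hK : 0 ≤ K) (hm : 0 < m)
    (hφ : ∀ r u, 0 < r → |u| ≤ r/2 → φ (r+u) + φ (r-u) - 2 * φ r ≤ - (m * u^2 * r^(γ-2)))
    {x0 x y : EuclideanSpace ℝ (Fin n)} {r : ℝ} (hr : 0 < r) (hr4 : r < 1/4) (hxy : ‖x - y‖ = r)
    (hx : ‖x‖ ≤ 1) (hy : ‖y‖ ≤ 5/4)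
    (hmax : ∀ x', ‖x'‖ ≤ 3/2 → ∀ y', ‖y'‖ ≤ 3/2 →
      w x' - w y' - L * φ ‖x'-y'‖ - K * ‖x'-x0‖^2 ≤ w x - w y - L * φ ‖x-y‖ - K * ‖x-x0‖^2)
    {ε : ℝ} (hε : 0 < ε) (hεr : ε < r/8) :
    L * (m * (r/4)^2 * r^(γ-2)) / (r/4)^((n:ℝ)+2*s) *
        ((r/32)^n * (volume : Measure (EuclideanSpace ℝ (Fin n))).real (ball 0 1))
      - 2*K*(∫ z in ball (0:EuclideanSpace ℝ (Fin n)) (1/4), ‖z‖^2 / ‖z‖^((n:ℝ)+2*s))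
      - (4 * M0 * (∫ z in {z : EuclideanSpace ℝ (Fin n) | 1/4 ≤ ‖z‖}, 1 / ‖z‖^((n:ℝ)+2*s))
        + 4 * (11^((n:ℝ)+2*s) * ∫ z, (1 + ‖z‖) ^ (-((n:ℝ) + 2*s)) * |w z|)) ≤
    2 * ((∫ z in {z | ε < ‖z‖}, (w x - w (x+z)) / ‖z‖^((n:ℝ)+2*s)) -
      ∫ z in {z | ε < ‖z‖}, (w y - w (y+z)) / ‖z‖^((n:ℝ)+2*s)) := by
  set p := (n:ℝ) + 2*s with hp
  have hn0 : (0:ℝ) < n := by exact_mod_cast hn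
  have hpn : (n:ℝ) < p := by linarith
  have hp0 : 0 < p := by linarith
  set ρ := r/4 with hρ
  have hρ0 : 0 < ρ := by positivity
  set e := r⁻¹ • (x - y) with he
  have hne : ‖e‖ = 1 := by
    rw [he, norm_smul, hxy, norm_inv, Real.norm_of_nonneg hr.le, inv_mul_cancel₀ hr.ne']
  have hxe : x - y = r • e := by rw [he, smul_smul, mul_inv_cancel₀ hr.ne', one_smul]
  set T := (ℝ ∙ e)ᗮ.reflection with hT
  have hTz : ∀ z, T z = z - (2 * inner ℝ e z) • e := by
    intro z
    rw [hT, Submodule.reflection_orthogonal_apply, Submodule.reflection_singleton_apply]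
    simp only [hne, two_smul, ← add_smul]
    simp
    module
  have cpl := coupling _ _ ε (diff_integrable hpn hw hI hε x) (diff_integrable hpn hw hI hε y) T ρ
  obtain ⟨hint, heq⟩ := cpl
  rw [← heq]
  -- the lower bound
  set S := {z : EuclideanSpace ℝ (Fin n) | ε < ‖z‖} with hS
  have mS : MeasurableSet S := measurableSet_lt measurable_const measurable_norm
  set D := {z : EuclideanSpace ℝ (Fin n) | 1/4 ≤ ‖z‖} with hD
  have mD : MeasurableSet D := measurableSet_le measurable_const measurable_norm
  set b := ball ((3*ρ/4) • e) (ρ/8) with hb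
  have mb : MeasurableSet b := measurableSet_ball
  have hbz : ∀ z ∈ b, ρ/2 ≤ inner ℝ e z ∧ ρ/2 < ‖z‖ ∧ ‖z‖ < ρ := by
    intro z hz
    have hz' : ‖z - (3*ρ/4) • e‖ < ρ/8 := by simpa [hb, dist_eq_norm] using hz
    have hn1 : ‖(3*ρ/4) • e‖ = 3*ρ/4 := by
      rw [norm_smul, hne, Real.norm_of_nonneg (by positivity), mul_one]
    have h1 : |inner ℝ e (z - (3*ρ/4) • e)| ≤ ‖z - (3*ρ/4) • e‖ := by
      simpa [hne] using abs_real_inner_le_norm e (z - (3*ρ/4) • e)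
    rw [inner_sub_right, inner_smul_right, real_inner_self_eq_norm_sq, hne] at h1
    have h2 := (abs_le.1 h1).1
    have h3 := norm_sub_norm_le z ((3*ρ/4) • e)
    have h4 := norm_sub_norm_le ((3*ρ/4) • e) z
    rw [norm_sub_rev] at h4
    refine ⟨by linarith, by linarith, by linarith⟩
  have hbS : b ⊆ S := fun z hz => by
    have := (hbz z hz).2.1
    show ε < ‖z‖
    linarith
  set A := L * (m * ρ^2 * r^(γ-2)) / ρ^p with hA
  have hA0 : 0 ≤ A := by positivity
  set tf : EuclideanSpace ℝ (Fin n) → ℝ := fun z => 4 * M0 * (1 / ‖z‖^p) +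
    (|w (x+z)|/‖z‖^p + |w (x+-z)|/‖z‖^p + |w (y+z)|/‖z‖^p + |w (y+-z)|/‖z‖^p) with htf
  set U : EuclideanSpace ℝ (Fin n) → ℝ :=
    (ball 0 (1/4)).indicator (fun z => 2*K*(‖z‖^2/‖z‖^p)) with hU
  have i1 : Integrable (b.indicator (fun _ => A)) :=
    IntegrableOn.integrable_indicator (integrableOn_const (measure_ball_lt_top.ne)) mb
  have i2 : Integrable U := by
    have h : IntegrableOn (fun z : EuclideanSpace ℝ (Fin n) => 2*K*(‖z‖^2/‖z‖^p)) (ball 0 (1/4)) :=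
      (local_integrable hn hs).const_mul (2*K)
    exact h.integrable_indicator measurableSet_ball
  have e11 : (1 + 3/2) / (1/4) + 1 = (11:ℝ) := by norm_num
  have t0 := const_tail_integrable (n := n) hpn (δ := 1/4) (by norm_num)
  have t1 := tail_integrable hp0 hw hI (R := 3/2) (δ := 1/4) (by norm_num) (by norm_num)
    (x := x) (by linarith)
  have t2 := tail_neg hp0 hw hI (R := 3/2) (δ := 1/4) (by norm_num) (by norm_num)
    (x := x) (by linarith)
  have t3 := tail_integrable hp0 hw hI (R := 3/2) (δ := 1/4) (by norm_num) (by norm_num)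
    (x := y) (by linarith)
  have t4 := tail_neg hp0 hw hI (R := 3/2) (δ := 1/4) (by norm_num) (by norm_num)
    (x := y) (by linarith)
  rw [e11] at t1 t2 t3 t4
  have M0nn : 0 ≤ M0 := (abs_nonneg _).trans (hM0 0 (by simp))
  have itf : IntegrableOn tf D :=
    (t0.const_mul (4*M0)).add (((t1.1.add t2.1).add t3.1).add t4.1)
  have i3 : Integrable (D.indicator tf) := itf.integrable_indicator mD
  have tfnn : ∀ z, 0 ≤ tf z := fun z => by simp only [htf]; positivity
  have Itf : ∫ z, D.indicator tf z ≤ 4 * M0 * (∫ z in D, 1 / ‖z‖^p)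
        + 4 * (11^p * ∫ z, (1 + ‖z‖) ^ (-p) * |w z|) := by
    rw [integral_indicator mD, htf]
    have c0 := t0.const_mul (4*M0)
    have c2 : IntegrableOn (fun z => |w (x+z)|/‖z‖^p + |w (x+-z)|/‖z‖^p) D := t1.1.add t2.1
    have c3 : IntegrableOn (fun z => |w (x+z)|/‖z‖^p + |w (x+-z)|/‖z‖^p + |w (y+z)|/‖z‖^p) D :=
      c2.add t3.1
    have c4 : IntegrableOn (fun z => |w (x+z)|/‖z‖^p + |w (x+-z)|/‖z‖^p + |w (y+z)|/‖z‖^p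
      + |w (y+-z)|/‖z‖^p) D := c3.add t4.1
    rw [integral_add c0 c4, integral_add c3 t4.1, integral_add c2 t3.1, integral_add t1.1 t2.1,
      integral_const_mul]
    have := t1.2
    have := t2.2
    have := t3.2
    have := t4.2
    linarith
  have IU : ∫ z, U z = 2*K*(∫ z in ball (0:EuclideanSpace ℝ (Fin n)) (1/4), ‖z‖^2 / ‖z‖^p) := by
    rw [hU, integral_indicator measurableSet_ball, integral_const_mul]
  have Ib : ∫ z in S, b.indicator (fun _ => A) z = A *
      ((r/32)^n * (volume : Measure (EuclideanSpace ℝ (Fin n))).real (ball 0 1)) := by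
    rw [setIntegral_indicator mb, inter_eq_right.2 hbS, setIntegral_const, smul_eq_mul, mul_comm]
    congr 1
    rw [Measure.real, Measure.addHaar_ball_of_pos _ _ (by positivity), ENNReal.toReal_mul,
      ENNReal.toReal_ofReal (by positivity), finrank_euclideanSpace, Fintype.card_fin, Measure.real]
    congr 2
    rw [hρ]; ring
  have lb : ∀ z ∈ S, b.indicator (fun _ => A) z - U z - D.indicator tf z ≤
      (w x - w (x + z)) / ‖z‖ ^ p + (w x - w (x + -z)) / ‖-z‖ ^ p -
      ((w y - w (y + if ‖z‖ < ρ then T z else z)) / ‖if ‖z‖ < ρ then T z else z‖ ^ p +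
       (w y - w (y + -if ‖z‖ < ρ then T z else z)) / ‖-if ‖z‖ < ρ then T z else z‖ ^ p) := by
    intro z hz
    have hz0 : 0 < ‖z‖ := hε.trans hz
    have hzp : 0 < ‖z‖^p := by positivity
    have hq : ‖(if ‖z‖ < ρ then T z else z)‖ = ‖z‖ := by split_ifs <;> simp
    rw [norm_neg, norm_neg, hq]
    set q := (if ‖z‖ < ρ then T z else z) with hqdef
    rw [← add_div, ← add_div, ← sub_div]
    by_cases hfar : 1/4 ≤ ‖z‖
    · have zb : z ∉ b := fun h => by have := (hbz z h).2.2; linarith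
      have zU : z ∉ ball (0:EuclideanSpace ℝ (Fin n)) (1/4) := by simpa using hfar
      have hqz : q = z := by rw [hqdef, if_neg]; linarith
      rw [indicator_of_notMem zb, hU, indicator_of_notMem zU, indicator_of_mem (show z ∈ D from hfar), hqz]
      have e : 0 - 0 - tf z = -(4 * M0 + (|w (x+z)| + |w (x+-z)| + |w (y+z)| + |w (y+-z)|)) / ‖z‖^p := by
        rw [htf]; ring
      rw [e]
      apply div_le_div_of_nonneg_right _ hzp.le
      have b1 := abs_le.1 (hM0 x (by linarith))
      have b2 := abs_le.1 (hM0 y (by linarith))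
      have := le_abs_self (w (x+z))
      have := le_abs_self (w (x+-z))
      have := neg_abs_le (w (y+z))
      have := neg_abs_le (w (y+-z))
      linarith [b1.1, b2.2]
    · push Not at hfar
      have zD : z ∉ D := by simpa [hD] using hfar
      have zU : z ∈ ball (0:EuclideanSpace ℝ (Fin n)) (1/4) := by simpa using hfar
      rw [indicator_of_notMem zD, hU, indicator_of_mem zU, sub_zero]
      by_cases hnear : ‖z‖ < ρ
      · have hqT : q = z - (2 * inner ℝ e z) • e := by rw [hqdef, if_pos hnear, hTz]
        have hin : |inner ℝ e z| ≤ ‖z‖ := by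
          simpa [hne] using abs_real_inner_le_norm e z
        have hu : |2 * inner ℝ e z| ≤ r/2 := by
          rw [abs_mul, abs_two]; linarith
        obtain ⟨hu1, hu2⟩ := abs_le.1 hu
        have nb := near_bound (q := q) hL hφ hr hxy hx hy hmax hfar.le (hq.trans_le hfar.le) hu
          (by
            have : x + z - (y + q) = (r + 2 * inner ℝ e z) • e := by
              rw [hqT, add_smul, ← hxe]; abel
            rw [this, norm_smul, hne, mul_one, Real.norm_of_nonneg (by linarith)])
          (by
            have : x + -z - (y + -q) = (r - 2 * inner ℝ e z) • e := by
              rw [hqT, sub_smul, ← hxe]; abel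
            rw [this, norm_smul, hne, mul_one, Real.norm_of_nonneg (by linarith)])
        refine le_trans ?_ (div_le_div_of_nonneg_right nb hzp.le)
        rw [sub_div, ← mul_div_assoc]
        apply sub_le_sub_right
        by_cases hzb : z ∈ b
        · rw [indicator_of_mem hzb, hA]
          have := (hbz z hzb).1
          have h1 : ρ^2 ≤ (2 * inner ℝ e z)^2 := by
            apply pow_le_pow_left₀ hρ0.le; linarith
          have h2 : ‖z‖^p ≤ ρ^p := Real.rpow_le_rpow hz0.le hnear.le hp0.le
          have h3 : 0 ≤ r^(γ-2) := by positivity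
          gcongr
        · rw [indicator_of_notMem hzb]
          positivity
      · have zb : z ∉ b := fun h => hnear (hbz z h).2.2
        have hqz : q = z := by rw [hqdef, if_neg hnear]
        rw [indicator_of_notMem zb, hqz]
        have nb := near_bound (q := z) (z := z) (u := 0) hL hφ hr hxy hx hy hmax hfar.le hfar.le
          (by simp; positivity) (by rw [← hxy]; simp) (by rw [← hxy]; simp)
        refine le_trans (le_of_eq ?_) (div_le_div_of_nonneg_right nb hzp.le)
        ring
  have i12 : IntegrableOn (fun z => b.indicator (fun _ => A) z - U z) S := (i1.sub i2).integrableOn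
  have i123 : IntegrableOn (fun z => b.indicator (fun _ => A) z - U z - D.indicator tf z) S :=
    i12.sub i3.integrableOn
  have key := setIntegral_mono_on i123 hint mS lb
  rw [integral_sub i12 i3.integrableOn, integral_sub i1.integrableOn i2.integrableOn, Ib] at key
  have k1 : ∫ z in S, U z ≤ ∫ z, U z :=
    setIntegral_le_integral i2 (Eventually.of_forall fun z => by
      apply indicator_nonneg; intro z _; positivity)
  have k2 : ∫ z in S, D.indicator tf z ≤ ∫ z, D.indicator tf z :=
    setIntegral_le_integral i3 (Eventually.of_forall fun z => indicator_nonneg (fun z _ => tfnn z) z)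
  rw [IU] at k1
  linarith

lemma gain {n : ℕ} {s γ m ω L r : ℝ} (hγ : γ < 2*s) (hm : 0 < m) (hω : 0 < ω) (hL : 0 ≤ L)
    (hr : 0 < r) (hr1 : r < 1/4) :
    L * (m * ω * ((1/8)^n * (1/4)^(2-2*s))) ≤
    L * (m * (r/4)^2 * r^(γ-2)) / (r/4)^((n:ℝ)+2*s) * ((r/32)^n * ω) := by
  have h4 : 0 < r/4 := by positivity
  have e1 : (r/4)^((n:ℝ)+2*s) = (r/4)^n * (r/4)^(2*s) := by
    rw [Real.rpow_add h4, Real.rpow_natCast]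
  have e2 : (r/32)^n = (r/4)^n * (1/8)^n := by rw [← mul_pow]; congr 1; ring
  have e3 : (r/4)^2 = (r/4)^(2*s) * (r/4)^(2-2*s) := by
    rw [← Real.rpow_add h4, ← Real.rpow_natCast]; congr 1; push_cast; ring
  have e4 : (r/4)^(2-2*s) = r^(2-2*s) * (1/4)^(2-2*s) := by
    rw [← Real.mul_rpow hr.le (by norm_num)]; congr 1; ring
  have e5 : r^(2-2*s) * r^(γ-2) = r^(γ-2*s) := by
    rw [← Real.rpow_add hr]; congr 1; ring
  have e6 : 1 ≤ r^(γ-2*s) :=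
    Real.one_le_rpow_of_pos_of_le_one_of_nonpos hr (by linarith) (by linarith)
  have e : L * (m * (r/4)^2 * r^(γ-2)) / (r/4)^((n:ℝ)+2*s) * ((r/32)^n * ω) =
      L * (m * ω * ((1/8)^n * (1/4)^(2-2*s))) * r^(γ-2*s) := by
    rw [e1, e2, e3, e4, ← e5]
    have h1 : (r/4)^n ≠ 0 := by positivity
    have h2 : (r/4)^(2*s) ≠ 0 := by positivity
    generalize (r/4)^n = X at *
    generalize (r/4)^(2*s) = Y at *
    field_simp
  rw [e]
  exact le_mul_of_one_le_right (by positivity) e6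

set_option maxHeartbeats 1000000 in
/-- **Interior Hölder estimate for the fractional Laplacian (Hölder range).** Let
`0 < β < 2s`, `β ≤ 1`. There is a constant `C = C(n,s,β)` such that if `w` is smooth
with `∫ (1+|x|)^{−n−2s} |w(x)| dx < ∞`, `h` is bounded on `B₂`, and `(−Δ)^s w = h`
in `B₂`, then for all `x, y ∈ B_{1/2}`:
`|w(x) − w(y)| ≤ C (∫ (1+|z|)^{−n−2s}|w(z)|dz + sup_{B₂}|w| + sup_{B₂}|h|) |x−y|^β`,
and `sup_{B_{1/2}} |w| ≤ C (∫ (1+|z|)^{−n−2s}|w(z)|dz + sup_{B₂}|w| + sup_{B₂}|h|)`. -/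
theorem interior_Holder_estimate_fracLap
    (n : ℕ) (hn : 0 < n) (s : ℝ) (hs : s ∈ Set.Ioo (0 : ℝ) 1)
    (β : ℝ) (hβ : 0 < β) (hβ2s : β < 2 * s) (hβ1 : β ≤ 1) :
    ∃ C : ℝ, ∀ w h : EuclideanSpace ℝ (Fin n) → ℝ,
      ContDiff ℝ (⊤ : ℕ∞) w →
      MeasureTheory.Integrable
        (fun x : EuclideanSpace ℝ (Fin n) => (1 + ‖x‖) ^ (-(n : ℝ) - 2 * s) * |w x|) →
      (∃ M, ∀ x ∈ Metric.ball (0 : EuclideanSpace ℝ (Fin n)) 2, |h x| ≤ M) →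
      (∀ x ∈ Metric.ball (0 : EuclideanSpace ℝ (Fin n)) 2, fracLapEq n s w x (h x)) →
      (∀ x ∈ Metric.ball (0 : EuclideanSpace ℝ (Fin n)) (1 / 2),
        ∀ y ∈ Metric.ball (0 : EuclideanSpace ℝ (Fin n)) (1 / 2),
          |w x - w y| ≤
            C * ((∫ z : EuclideanSpace ℝ (Fin n),
                    (1 + ‖z‖) ^ (-(n : ℝ) - 2 * s) * |w z|) +
                  supOn (Metric.ball (0 : EuclideanSpace ℝ (Fin n)) 2) w +
                  supOn (Metric.ball (0 : EuclideanSpace ℝ (Fin n)) 2) h) *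
              dist x y ^ β) ∧
      (∀ x ∈ Metric.ball (0 : EuclideanSpace ℝ (Fin n)) (1 / 2),
        |w x| ≤
          C * ((∫ z : EuclideanSpace ℝ (Fin n),
                  (1 + ‖z‖) ^ (-(n : ℝ) - 2 * s) * |w z|) +
                supOn (Metric.ball (0 : EuclideanSpace ℝ (Fin n)) 2) w +
                supOn (Metric.ball (0 : EuclideanSpace ℝ (Fin n)) 2) h)) := by
  obtain ⟨hs0, hs1⟩ := hs
  obtain ⟨φ, γ, m, hγ, hm, hφc, hφb, hφ⟩ := exists_phi s β hβ hs1 hβ2s hβ1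
  set p := (n:ℝ) + 2*s with hp
  have hpe : -(n:ℝ) - 2*s = -p := by rw [hp]; ring
  have hn0 : (0:ℝ) < n := by exact_mod_cast hn
  set c : ℝ := (2 ^ (2 * s) * s * Real.Gamma (s + n / 2) /
          (Real.pi ^ ((n : ℝ) / 2) * Real.Gamma (1 - s))) with hc
  have hc0 : 0 < c := by
    have g1 : 0 < Real.Gamma (s + n/2) := Real.Gamma_pos_of_pos (by positivity)
    have g2 : 0 < Real.Gamma (1-s) := Real.Gamma_pos_of_pos (by linarith)
    have := Real.pi_pos
    positivity
  set ω := (volume : Measure (EuclideanSpace ℝ (Fin n))).real (ball 0 1) with hω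
  have hω0 : 0 < ω :=
    ENNReal.toReal_pos (measure_ball_pos volume _ one_pos).ne' measure_ball_lt_top.ne
  set J0 := ∫ z in ball (0:EuclideanSpace ℝ (Fin n)) (1/4), ‖z‖^2 / ‖z‖^p with hJ0
  set J1 := ∫ z in {z : EuclideanSpace ℝ (Fin n) | 1/4 ≤ ‖z‖}, 1 / ‖z‖^p with hJ1
  have J0nn : 0 ≤ J0 := integral_nonneg fun z => by positivity
  have J1nn : 0 ≤ J1 := integral_nonneg fun z => by positivity
  set m1 := m * ω * ((1/8)^n * (1/4)^(2-2*s)) with hm1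
  have hm10 : 0 < m1 := by positivity
  set C1 := 4/c + 16*J0 + 4*J1 + 4*11^p with hC1
  have hC10 : 0 < C1 := by positivity
  set C := 16 + (C1+1)/m1 with hC
  have hC16 : 16 ≤ C := by
    have : 0 ≤ (C1+1)/m1 := by positivity
    linarith
  clear_value C C1 m1 J0 J1 ω c
  refine ⟨C, ?_⟩
  intro w h hw hI hh hfl
  rw [hpe] at *
  set I := ∫ z : EuclideanSpace ℝ (Fin n), (1 + ‖z‖) ^ (-p) * |w z| with hIdef
  have Inn : 0 ≤ I := integral_nonneg fun z => by positivity
  have hwc : Continuous w := hw.continuous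
  -- sup norms
  have bw : BddAbove ((fun x => |w x|) '' ball (0 : EuclideanSpace ℝ (Fin n)) 2) := by
    have := ((isCompact_closedBall (0 : EuclideanSpace ℝ (Fin n)) 2).image
      (continuous_abs.comp hwc)).bddAbove
    exact this.mono (image_mono ball_subset_closedBall)
  have bh : BddAbove ((fun x => |h x|) '' ball (0 : EuclideanSpace ℝ (Fin n)) 2) := by
    obtain ⟨M, hM⟩ := hh
    refine ⟨M, ?_⟩
    rintro _ ⟨x, hx, rfl⟩
    exact hM x hx
  set M0 := supOn (ball (0 : EuclideanSpace ℝ (Fin n)) 2) w with hM0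
  set H := supOn (ball (0 : EuclideanSpace ℝ (Fin n)) 2) h with hH
  have hwM : ∀ x, ‖x‖ < 2 → |w x| ≤ M0 := fun x hx =>
    le_csSup bw ⟨x, by simpa using hx, rfl⟩
  have hhH : ∀ x, ‖x‖ < 2 → |h x| ≤ H := fun x hx =>
    le_csSup bh ⟨x, by simpa using hx, rfl⟩
  have M0nn : 0 ≤ M0 := (abs_nonneg _).trans (hwM 0 (by simp))
  have Hnn : 0 ≤ H := (abs_nonneg _).trans (hhH 0 (by simp))
  set S := I + M0 + H with hS
  have Snn : 0 ≤ S := by positivity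
  clear_value S I M0 H
  have main : ∀ x0 : EuclideanSpace ℝ (Fin n), ‖x0‖ < 1/2 → ∀ y0 : EuclideanSpace ℝ (Fin n),
      ‖y0‖ < 1/2 → w x0 - w y0 ≤ C * S * φ ‖x0 - y0‖ := by
    intro x0 hx0 y0 hy0
    by_contra hcon
    push Not at hcon
    set L := C * S with hLdef
    have hLnn : 0 ≤ L := by positivity
    set K := 8 * M0 with hK
    -- maximum
    set Φ : EuclideanSpace ℝ (Fin n) × EuclideanSpace ℝ (Fin n) → ℝ := fun q =>
      w q.1 - w q.2 - L * φ ‖q.1-q.2‖ - K * ‖q.1-x0‖^2 with hΦ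
    have hΦc : Continuous Φ := by fun_prop
    have hcomp := (isCompact_closedBall (0 : EuclideanSpace ℝ (Fin n)) (3/2)).prod
      (isCompact_closedBall (0 : EuclideanSpace ℝ (Fin n)) (3/2))
    have hmem : (x0, y0) ∈ closedBall (0 : EuclideanSpace ℝ (Fin n)) (3/2) ×ˢ
        closedBall (0 : EuclideanSpace ℝ (Fin n)) (3/2) := by
      constructor
      · simp only [mem_closedBall_zero_iff]; linarith
      · simp only [mem_closedBall_zero_iff]; linarith
    obtain ⟨⟨x, y⟩, ⟨hx, hy⟩, hmx⟩ := hcomp.exists_isMaxOn ⟨_, hmem⟩ hΦc.continuousOn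
    simp only [mem_closedBall_zero_iff] at hx hy
    have hpos : 0 < Φ (x, y) := by
      refine lt_of_lt_of_le ?_ (hmx hmem)
      simp only [hΦ, sub_self, norm_zero]
      linarith
    simp only [hΦ] at hpos
    have hmax : ∀ x', ‖x'‖ ≤ 3/2 → ∀ y', ‖y'‖ ≤ 3/2 →
        w x' - w y' - L * φ ‖x'-y'‖ - K * ‖x'-x0‖^2 ≤ w x - w y - L * φ ‖x-y‖ - K * ‖x-x0‖^2 := by
      intro x' hx' y' hy'
      exact hmx (show (x', y') ∈ closedBall (0 : EuclideanSpace ℝ (Fin n)) (3/2) ×ˢ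
        closedBall (0 : EuclideanSpace ℝ (Fin n)) (3/2) from
        ⟨by simpa using hx', by simpa using hy'⟩)
    have b1 := abs_le.1 (hwM x (by linarith))
    have b2 := abs_le.1 (hwM y (by linarith))
    set r := ‖x - y‖ with hr
    have hr4 : r ≤ 4 := (norm_sub_le x y).trans (by linarith)
    have hrnn : 0 ≤ r := norm_nonneg _
    obtain ⟨f1, f2⟩ := hφb r hrnn hr4
    have hrβ : 0 ≤ r^β := by positivity
    have hLφ : 0 ≤ L * φ r := mul_nonneg hLnn (by linarith)
    have hKx : 0 ≤ K * ‖x-x0‖^2 := by positivity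
    have M0pos : 0 < M0 := by
      by_contra hM
      linarith [b1.2, b2.1]
    have hSM : M0 ≤ S := by rw [hS]; linarith
    have Spos : 0 < S := by linarith
    have hxx : ‖x - x0‖ < 1/2 := by
      by_contra hge
      push Not at hge
      have : (1/2:ℝ)^2 ≤ ‖x-x0‖^2 := pow_le_pow_left₀ (by norm_num) hge 2
      have : K * (1/2:ℝ)^2 ≤ K * ‖x-x0‖^2 := mul_le_mul_of_nonneg_left this (by positivity)
      rw [hK] at *
      linarith [b1.2, b2.1]
    have hrlt : r < 1/4 := by
      by_contra hge
      push Not at hge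
      have h1 : (1/4:ℝ) ≤ (1/4:ℝ)^β := by
        have := Real.rpow_le_rpow_of_exponent_ge (x := (1/4:ℝ)) (by norm_num) (by norm_num) hβ1
        rwa [Real.rpow_one] at this
      have h2 : (1/4:ℝ)^β ≤ r^β := Real.rpow_le_rpow (by norm_num) hge hβ.le
      have h3 : 16 * M0 ≤ L := by
        rw [hLdef]; exact mul_le_mul hC16 hSM M0nn (by linarith)
      have h4 : 16 * M0 * (1/8) ≤ L * φ r :=
        mul_le_mul h3 (by linarith) (by norm_num) hLnn
      linarith [b1.2, b2.1]
    have hr0 : 0 < r := by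
      rcases hrnn.eq_or_lt with h0 | h0
      · exfalso
        have : x = y := by
          rw [← sub_eq_zero, ← norm_eq_zero]; exact h0.symm
        rw [this] at hpos hKx
        have : r^β = 0 := by rw [← h0, Real.zero_rpow hβ.ne']
        linarith
      · exact h0
    have hx1 : ‖x‖ ≤ 1 := by
      have := norm_add_le (x - x0) x0
      rw [sub_add_cancel] at this
      linarith
    have hy1 : ‖y‖ ≤ 5/4 := by
      have := norm_sub_norm_le y x
      rw [norm_sub_rev] at this
      linarith
    clear_value L K
    -- limit
    have lx := hfl x (by simp; linarith)
    have ly := hfl y (by simp; linarith)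
    unfold fracLapEq at lx ly
    simp only [translate_int] at lx ly
    rw [← hc, ← hp] at lx ly
    have ll := (lx.sub ly).const_mul 2
    have hB := ge_of_tendsto ll (b := c * (L * m1 - 16*M0*J0 - (4*M0*J1 + 4*(11^p * I)))) (by
      have hev : ∀ᶠ ε in nhdsWithin (0:ℝ) (Ioi 0), ε ∈ Ioo 0 (r/8) :=
        Ioo_mem_nhdsGT (by positivity)
      filter_upwards [hev] with ε hε
      have hcore := core hn hs0 hs1 hwc hI hwM hLnn (K := K) (by rw [hK]; positivity) hm hφ hr0 hrlt hr.symm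
        hx1 hy1 hmax hε.1 hε.2
      have hg := gain (n := n) hγ hm hω0 hLnn hr0 hrlt
      rw [← hp, ← hω, ← hJ0, ← hJ1, ← hIdef] at hcore
      rw [← hp] at hg
      have : L * m1 - 16*M0*J0 - (4*M0*J1 + 4*(11^p * I)) ≤ _ :=
        le_trans (by rw [hm1, hK]; linarith) hcore
      have := mul_le_mul_of_nonneg_left this hc0.le
      refine this.trans (le_of_eq ?_)
      ring)
    have hhx := abs_le.1 (hhH x (by linarith))
    have hhy := abs_le.1 (hhH y (by linarith))
    have hB2 : c * (L * m1 - 16*M0*J0 - (4*M0*J1 + 4*(11^p * I))) ≤ 4 * H := by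
      linarith [hhx.2, hhy.1]
    have hB3 : L * m1 - 16*M0*J0 - (4*M0*J1 + 4*(11^p * I)) ≤ 4/c * H := by
      rw [div_mul_eq_mul_div, le_div_iff₀ hc0]; linarith
    have hIS : I ≤ S := by rw [hS]; linarith
    have hHS : H ≤ S := by rw [hS]; linarith
    have q1 : 4/c * H ≤ 4/c * S := mul_le_mul_of_nonneg_left hHS (by positivity)
    have q2 : J0 * M0 ≤ J0 * S := mul_le_mul_of_nonneg_left hSM J0nn
    have q3 : J1 * M0 ≤ J1 * S := mul_le_mul_of_nonneg_left hSM J1nn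
    have q4 : (11:ℝ)^p * I ≤ 11^p * S := mul_le_mul_of_nonneg_left hIS (by positivity)
    have hle : L * m1 ≤ C1 * S := by
      rw [hC1]; linarith
    have hge : (C1 + 1) * S ≤ L * m1 := by
      have : L * m1 = 16 * S * m1 + (C1+1) * S := by
        rw [hLdef, hC]; field_simp
      rw [this]
      have : 0 ≤ 16 * S * m1 := by positivity
      linarith
    linarith
  have hCS : 0 ≤ C * S := by positivity
  refine ⟨?_, ?_⟩
  · intro x hx y hy
    simp only [mem_ball_zero_iff] at hx hy
    have hd : ‖x - y‖ ≤ 4 := (norm_sub_le x y).trans (by linarith)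
    have hφ' := mul_le_mul_of_nonneg_left (hφb _ (norm_nonneg (x-y)) hd).2 hCS
    have m1 := main x hx y hy
    have m2 := main y hy x hx
    rw [norm_sub_rev] at m2
    rw [dist_eq_norm, abs_le]
    constructor <;> linarith
  · intro x hx
    simp only [mem_ball_zero_iff] at hx
    have h1 := hwM x (by linarith)
    have h2 : M0 ≤ S := by rw [hS]; linarith
    have h3 : S ≤ C * S := le_mul_of_one_le_left Snn (by linarith)
    linarith
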